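/- arXiv:1502.02799 — 2 statements merged into one kernel-verified Lean document; each statement's English description precedes it below -/
import Mathlib

section
/- Let Π be a CNF theory and p, q two atoms. Then unfold(unfold(Π, p), q) ≡ unfold(unfold(Π, q), p). -/
variable {α : Type*} [Fintype α] [DecidableEq α]

/-- A clause (or term): a finite set of literals, where a literal is an atom
paired with a polarity (`true` = positive occurrence, `false` = negated). -/
abbrev Clause (α : Type*) := Finset (α × Bool)

/-- A finite set of literals is a legal clause/term if it contains no
complementary pair of literals. -/
def IsClause (c : Clause α) : Prop := ∀ p : α, ¬((p, true) ∈ c ∧ (p, false) ∈ c)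

instance : DecidablePred (IsClause (α := α)) := fun c =>
  decidable_of_iff (∀ p : α, ¬((p, true) ∈ c ∧ (p, false) ∈ c)) Iff.rfl

/-- The atoms occurring in a clause/term. -/
def varsC (c : Clause α) : Finset α := c.image Prod.fst

/-- The atoms occurring positively in a clause/term. -/
def posC (c : Clause α) : Finset α := (c.filter fun l => l.2 = true).image Prod.fst

/-- The atoms occurring negatively in a clause/term. -/
def negC (c : Clause α) : Finset α := (c.filter fun l => l.2 = false).image Prod.fst

/-- The resolvent of two clauses on atom `p`. -/
def res (c c' : Clause α) (p : α) : Clause α :=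
  (c ∪ c') \ ({(p, true), (p, false)} : Finset (α × Bool))

/-- `c` and `c'` are resolvable on atom `p`: `p` occurs in one of them and `¬p` in
the other, and the resolvent contains no complementary pair of literals. -/
def ResolvableOn (c c' : Clause α) (p : α) : Prop :=
  ((p, true) ∈ c ∧ (p, false) ∈ c' ∨ (p, false) ∈ c ∧ (p, true) ∈ c') ∧ IsClause (res c c' p)

/-- Renaming of a literal: flip the polarity of atoms in `V`. -/
def renLit (V : Finset α) (l : α × Bool) : α × Bool := if l.1 ∈ V then (l.1, !l.2) else l

/-- Renaming of a clause w.r.t. the atoms in `V`. -/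
def renClause (V : Finset α) (c : Clause α) : Clause α := c.image (renLit V)

/-- Renaming of a CNF theory w.r.t. the atoms in `V`. -/
def renTheory (V : Finset α) (T : Finset (Clause α)) : Finset (Clause α) := T.image (renClause V)

/-- A Horn clause: at most one positive literal. -/
def HornClause (c : Clause α) : Prop := (posC c).card ≤ 1

/-- A Horn theory: a finite set of Horn clauses. -/
def IsHornTheory (T : Finset (Clause α)) : Prop := ∀ c ∈ T, HornClause c

/-- A Krom theory: each clause contains at most 2 literals. -/
def IsKromTheory (T : Finset (Clause α)) : Prop := ∀ c ∈ T, c.card ≤ 2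

/-- `T` is Horn renamable: some renaming of `T` is a Horn theory. -/
def IsRenHorn (T : Finset (Clause α)) : Prop := ∃ V : Finset α, IsHornTheory (renTheory V T)

/-- The QH-conditions for sets of atoms `Q`, `H` and a clause `c`. -/
def QHcond (Q H : Finset α) (c : Clause α) : Prop :=
  (varsC c ∩ Q).card ≤ 2 ∧ (posC c ∩ H).card ≤ 1 ∧
    ((posC c ∩ H).card = 1 → varsC c ∩ Q = ∅)

/-- The atoms occurring in a CNF theory. -/
def varsT (T : Finset (Clause α)) : Finset α := T.sup varsC

/-- `T` has a QH-partition: a partition `{Q, H}` of its atoms satisfying the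
QH-conditions for each of its clauses. -/
def HasQHPartition (T : Finset (Clause α)) : Prop :=
  ∃ Q H : Finset α, Q ∩ H = ∅ ∧ Q ∪ H = varsT T ∧ ∀ c ∈ T, QHcond Q H c

/-- `T` is q-Horn: some renaming of `T` has a QH-partition. -/
def IsQHorn (T : Finset (Clause α)) : Prop := ∃ V : Finset α, HasQHPartition (renTheory V T)

/-- Satisfaction of a literal by an interpretation (a set of atoms). -/
def litSat (I : Set α) (l : α × Bool) : Prop := if l.2 then l.1 ∈ I else l.1 ∉ I

/-- Satisfaction of a clause (read disjunctively). -/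
def clauseSat (I : Set α) (c : Clause α) : Prop := ∃ l ∈ c, litSat I l

/-- Satisfaction of a term (read conjunctively). -/
def termSat (I : Set α) (t : Clause α) : Prop := ∀ l ∈ t, litSat I l

/-- Satisfaction of a CNF theory. -/
def cnfSat (I : Set α) (T : Finset (Clause α)) : Prop := ∀ c ∈ T, clauseSat I c

/-- One step of the resolution closure. -/
def resStep (S : Set (Clause α)) : Set (Clause α) :=
  S ∪ {d | ∃ c ∈ S, ∃ c' ∈ S, ∃ p : α, ResolvableOn c c' p ∧ d = res c c' p}

/-- The iterated resolution closure `res^n_T`. -/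
def resIter (T : Finset (Clause α)) : ℕ → Set (Clause α)
  | 0 => (↑T : Set (Clause α))
  | n + 1 => resStep (resIter T n)

/-- Propositional formulas over atoms `α`. -/
inductive PropForm (α : Type*) where
  | var : α → PropForm α
  | tru : PropForm α
  | fls : PropForm α
  | neg : PropForm α → PropForm α
  | conj : PropForm α → PropForm α → PropForm α
  | disj : PropForm α → PropForm α → PropForm α

namespace PropForm

/-- Satisfaction of a formula by an interpretation. -/
def Sat (I : Set α) : PropForm α → Prop
  | var p => p ∈ I
  | tru => True
  | fls => False
  | neg φ => ¬ Sat I φ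
  | conj φ ψ => Sat I φ ∧ Sat I ψ
  | disj φ ψ => Sat I φ ∨ Sat I ψ

/-- Logical equivalence: same models. -/
def equivalent (φ ψ : PropForm α) : Prop := ∀ I : Set α, Sat I φ ↔ Sat I ψ

/-- Entailment: every model of `φ` is a model of `ψ`. -/
def entails (φ ψ : PropForm α) : Prop := ∀ I : Set α, Sat I φ → Sat I ψ

/-- The atoms occurring in a formula. -/
def vars : PropForm α → Finset α
  | var p => {p}
  | tru => ∅
  | fls => ∅
  | neg φ => vars φ
  | conj φ ψ => vars φ ∪ vars ψ
  | disj φ ψ => vars φ ∪ vars ψ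

/-- Substitution of the formula `χ` for the atom `p`. -/
def subst (p : α) (χ : PropForm α) : PropForm α → PropForm α
  | var q => if q = p then χ else var q
  | tru => tru
  | fls => fls
  | neg φ => neg (subst p χ φ)
  | conj φ ψ => conj (subst p χ φ) (subst p χ ψ)
  | disj φ ψ => disj (subst p χ φ) (subst p χ ψ)

/-- Forgetting a single atom: `Forget(φ, {p}) = φ[p/⊤] ∨ φ[p/⊥]`. -/
def forget1 (φ : PropForm α) (p : α) : PropForm α := disj (subst p tru φ) (subst p fls φ)

/-- Forgetting a set of atoms (presented as a list), one atom at a time: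
`Forget(φ, ∅) = φ` and `Forget(φ, V ∪ {p}) = Forget(Forget(φ, {p}), V)`. -/
def Forget : PropForm α → List α → PropForm α
  | φ, [] => φ
  | φ, p :: V => Forget (forget1 φ p) V

/-- Renaming of a formula: replace each occurrence of an atom `p ∈ V` by `¬p`. -/
def renForm (V : Finset α) : PropForm α → PropForm α
  | var p => if p ∈ V then neg (var p) else var p
  | tru => tru
  | fls => fls
  | neg φ => neg (renForm V φ)
  | conj φ ψ => conj (renForm V φ) (renForm V ψ)
  | disj φ ψ => disj (renForm V φ) (renForm V ψ)

/-- `φ` is irrelevant to the atoms in `V`: it is equivalent to a formula not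
mentioning any atom of `V`. -/
def IR (φ : PropForm α) (V : List α) : Prop :=
  ∃ φ' : PropForm α, equivalent φ φ' ∧ ∀ p ∈ V, p ∉ vars φ'

end PropForm

/-- The formula corresponding to a literal. -/
def litToForm (l : α × Bool) : PropForm α :=
  if l.2 then PropForm.var l.1 else PropForm.neg (PropForm.var l.1)

/-- The disjunction of the literals of a clause. -/
noncomputable def clauseToForm (c : Clause α) : PropForm α :=
  c.toList.foldr (fun l φ => PropForm.disj (litToForm l) φ) PropForm.fls

/-- The conjunction of the clauses of a CNF theory. -/
noncomputable def cnfToForm (T : Finset (Clause α)) : PropForm α :=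
  T.toList.foldr (fun c φ => PropForm.conj (clauseToForm c) φ) PropForm.tru

/-- `φ` is Horn expressible. -/
def HornExpressible (φ : PropForm α) : Prop :=
  ∃ T : Finset (Clause α), (∀ c ∈ T, IsClause c) ∧ IsHornTheory T ∧
    PropForm.equivalent φ (cnfToForm T)

/-- `φ` is Krom expressible. -/
def KromExpressible (φ : PropForm α) : Prop :=
  ∃ T : Finset (Clause α), (∀ c ∈ T, IsClause c) ∧ IsKromTheory T ∧
    PropForm.equivalent φ (cnfToForm T)

/-- `φ` is renamable-Horn expressible. -/
def RenHornExpressible (φ : PropForm α) : Prop :=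
  ∃ T : Finset (Clause α), (∀ c ∈ T, IsClause c) ∧ IsRenHorn T ∧
    PropForm.equivalent φ (cnfToForm T)

/-- `φ` is q-Horn expressible. -/
def QHornExpressible (φ : PropForm α) : Prop :=
  ∃ T : Finset (Clause α), (∀ c ∈ T, IsClause c) ∧ IsQHorn T ∧
    PropForm.equivalent φ (cnfToForm T)

/-- A formula entails a clause. -/
def EntailsClause (φ : PropForm α) (c : Clause α) : Prop :=
  ∀ I : Set α, PropForm.Sat I φ → clauseSat I c

/-- A prime implicate of a formula. -/
def IsPrimeImplicate (φ : PropForm α) (c : Clause α) : Prop :=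
  IsClause c ∧ EntailsClause φ c ∧ ∀ c' ⊂ c, ¬ EntailsClause φ c'

/-- A term entails a formula. -/
def TermEntails (t : Clause α) (φ : PropForm α) : Prop :=
  ∀ I : Set α, termSat I t → PropForm.Sat I φ

/-- A prime implicant of a formula. -/
def IsPrimeImplicant (φ : PropForm α) (t : Clause α) : Prop :=
  IsClause t ∧ TermEntails t φ ∧ ∀ t' ⊂ t, ¬ TermEntails t' φ

/-- A CNF theory entails a clause. -/
def TheoryEntailsClause (T : Finset (Clause α)) (c : Clause α) : Prop :=
  ∀ I : Set α, cnfSat I T → clauseSat I c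

/-- A prime implicate of a CNF theory. -/
def IsPrimeImplicateT (T : Finset (Clause α)) (c : Clause α) : Prop :=
  IsClause c ∧ TheoryEntailsClause T c ∧ ∀ c' ⊂ c, ¬ TheoryEntailsClause T c'

/-- The set of prime implicates of a CNF theory, as a finite theory. -/
noncomputable def PI (T : Finset (Clause α)) : Finset (Clause α) :=
  (Set.toFinite {c : Clause α | IsPrimeImplicateT T c}).toFinset

/-- Strong unfolding of a CNF theory w.r.t. an atom `p`: keep the clauses not
mentioning `p`, and replace the clauses containing the positive literal `p` by all
their resolvents with clauses containing `¬p`; clauses containing `¬p` are removed. -/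
def unfold1 (T : Finset (Clause α)) (p : α) : Finset (Clause α) :=
  T.filter (fun c => (p, true) ∉ c ∧ (p, false) ∉ c) ∪
    ((T ×ˢ T).filter fun cc =>
        (p, true) ∈ cc.1 ∧ (p, false) ∈ cc.2 ∧ IsClause (res cc.1 cc.2 p)).image
      fun cc => res cc.1 cc.2 p

/-- Iterated strong unfolding w.r.t. a set of atoms (presented as a list):
`unfold(T, ∅) = T` and `unfold(T, V ∪ {p}) = unfold(unfold(T, p), V)`. -/
def unfoldList (T : Finset (Clause α)) : List α → Finset (Clause α)
  | [] => T
  | p :: V => unfoldList (unfold1 T p) V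

/-!
Strong unfolding computes forgetting: `I` is a model of `unfold1 T p` iff changing `I` at `p` alone
can produce a model of `T`. For the nontrivial direction, suppose `I \ {p}` falsifies `c ∈ T` and
`insert p I` falsifies `c' ∈ T`. Then either one of these clauses does not mention `p` and survives
in the unfolding, or `p` occurs positively in `c` and negatively in `c'`, and their resolvent
belongs to the unfolding; in each case `I` falsifies a clause of `unfold1 T p`.
Iterating, `I` is a model of `unfoldList T V` iff changing `I` on the atoms of `V` can produce a
model of `T`, a condition which depends only on the set of atoms listed in `V`.
-/

section Interpretations

variable {β : Type*} {I J K V W : Set β} {c : Clause β} {p : β}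

theorem PropForm.sat_foldr_disj {ι : Type*} (I : Set β) (f : ι → PropForm β) (L : List ι) :
    Sat I (L.foldr (fun i φ => disj (f i) φ) fls) ↔ ∃ i ∈ L, Sat I (f i) := by
  induction L with
  | nil => simp [Sat]
  | cons i L ih => simp only [List.foldr_cons, Sat, ih, List.mem_cons, exists_eq_or_imp]

theorem PropForm.sat_foldr_conj {ι : Type*} (I : Set β) (f : ι → PropForm β) (L : List ι) :
    Sat I (L.foldr (fun i φ => conj (f i) φ) tru) ↔ ∀ i ∈ L, Sat I (f i) := by
  induction L with
  | nil => simp [Sat]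
  | cons i L ih => simp only [List.foldr_cons, Sat, ih, List.mem_cons, forall_eq_or_imp]

theorem sat_litToForm (I : Set β) (l : β × Bool) : (litToForm l).Sat I ↔ litSat I l := by
  rcases l with ⟨p, _ | _⟩ <;> simp [litToForm, litSat, PropForm.Sat]

theorem sat_clauseToForm (I : Set β) (c : Clause β) : (clauseToForm c).Sat I ↔ clauseSat I c := by
  simp only [clauseToForm, PropForm.sat_foldr_disj, Finset.mem_toList, sat_litToForm, clauseSat]

theorem sat_cnfToForm (I : Set β) (T : Finset (Clause β)) :
    (cnfToForm T).Sat I ↔ cnfSat I T := by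
  simp only [cnfToForm, PropForm.sat_foldr_conj, Finset.mem_toList, sat_clauseToForm, cnfSat]

theorem litSat_pos : litSat I (p, true) ↔ p ∈ I := by
  simp [litSat]

theorem litSat_neg : litSat I (p, false) ↔ p ∉ I := by
  simp [litSat]

theorem isClause_of_not_clauseSat (h : ¬clauseSat I c) : IsClause c := by
  rintro p ⟨hpos, hneg⟩
  by_cases hp : p ∈ I
  · exact h ⟨_, hpos, litSat_pos.2 hp⟩
  · exact h ⟨_, hneg, litSat_neg.2 hp⟩

/-- Two interpretations agree off `V` if they contain the same atoms outside `V`; forgetting the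
atoms of `V` identifies exactly such interpretations. -/
def AgreeOff (V I J : Set β) : Prop := ∀ a ∉ V, (a ∈ I ↔ a ∈ J)

theorem agreeOff_empty : AgreeOff ∅ I J ↔ I = J := by
  simp [AgreeOff, Set.ext_iff]

theorem agreeOff_insert (p : β) (I : Set β) : AgreeOff {p} I (insert p I) :=
  fun _ ha => (Set.mem_insert_iff.trans (or_iff_right ha)).symm

theorem agreeOff_sdiff (V I : Set β) : AgreeOff V I (I \ V) :=
  fun _ ha => (and_iff_left ha).symm

theorem exists_agreeOff_and_agreeOff :
    (∃ J, AgreeOff V I J ∧ AgreeOff W J K) ↔ AgreeOff (V ∪ W) I K := by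
  constructor
  · rintro ⟨J, hIJ, hJK⟩ a ha
    rw [Set.mem_union, not_or] at ha
    exact (hIJ a ha.1).trans (hJK a ha.2)
  · refine fun h => ⟨V.ite K I, fun a ha => ?_, fun a ha => ?_⟩
    · simp [Set.ite, ha]
    · by_cases haV : a ∈ V
      · simp [Set.ite, haV]
      · simpa [Set.ite, haV] using h a (by simp [haV, ha])

theorem AgreeOff.litSat_iff (h : AgreeOff V I J) {l : β × Bool} (hl : l.1 ∉ V) :
    litSat I l ↔ litSat J l := by
  simp only [litSat, h l.1 hl]

theorem AgreeOff.clauseSat_iff (h : AgreeOff V I J) (hc : ∀ l ∈ c, l.1 ∉ V) :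
    clauseSat I c ↔ clauseSat J c :=
  exists_congr fun _ => and_congr_right fun hl => h.litSat_iff (hc _ hl)

theorem forall_mem_fst_ne_iff :
    (∀ l ∈ c, l.1 ≠ p) ↔ (p, true) ∉ c ∧ (p, false) ∉ c := by
  constructor
  · exact fun h => ⟨fun hp => h _ hp rfl, fun hp => h _ hp rfl⟩
  · rintro ⟨hpos, hneg⟩ ⟨a, _ | _⟩ hl rfl
    exacts [hneg hl, hpos hl]

end Interpretations

section Resolution

variable {β : Type*} [DecidableEq β] {I J J' : Set β} {c c' : Clause β} {p : β}

theorem mem_res {l : β × Bool} : l ∈ res c c' p ↔ (l ∈ c ∨ l ∈ c') ∧ l.1 ≠ p := by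
  rcases l with ⟨a, _ | _⟩ <;> simp [res]

theorem clauseSat_res (hc : (p, false) ∉ c) (hc' : (p, true) ∉ c') (h : clauseSat I c)
    (h' : clauseSat I c') : clauseSat I (res c c' p) := by
  by_cases hp : p ∈ I
  · obtain ⟨⟨a, b⟩, hl, hsat⟩ := h'
    refine ⟨(a, b), mem_res.2 ⟨.inr hl, ?_⟩, hsat⟩
    rintro rfl
    cases b
    exacts [litSat_neg.1 hsat hp, hc' hl]
  · obtain ⟨⟨a, b⟩, hl, hsat⟩ := h
    refine ⟨(a, b), mem_res.2 ⟨.inl hl, ?_⟩, hsat⟩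
    rintro rfl
    cases b
    exacts [hc hl, hp (litSat_pos.1 hsat)]

theorem clauseSat_or_clauseSat_of_res (hJ : AgreeOff {p} I J) (hJ' : AgreeOff {p} I J')
    (h : clauseSat I (res c c' p)) : clauseSat J c ∨ clauseSat J' c' := by
  obtain ⟨l, hl, hsat⟩ := h
  obtain ⟨hl | hl, hlp⟩ := mem_res.1 hl
  · exact .inl ⟨l, hl, (hJ.litSat_iff hlp).1 hsat⟩
  · exact .inr ⟨l, hl, (hJ'.litSat_iff hlp).1 hsat⟩

end Resolution

section Unfolding

variable {T : Finset (Clause α)} {I J : Set α} {c d : Clause α} {p : α}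

theorem mem_unfold1 : d ∈ unfold1 T p ↔ (d ∈ T ∧ (p, true) ∉ d ∧ (p, false) ∉ d) ∨
    ∃ c ∈ T, ∃ c' ∈ T, (p, true) ∈ c ∧ (p, false) ∈ c' ∧ IsClause (res c c' p) ∧
      res c c' p = d := by
  simp only [unfold1, Finset.mem_union, Finset.mem_filter, Finset.mem_image,
    Finset.mem_product, Prod.exists]
  grind

theorem isClause_of_mem_unfold1 (hT : ∀ c ∈ T, IsClause c) :
    ∀ d ∈ unfold1 T p, IsClause d := by
  intro d hd
  obtain ⟨hd, -⟩ | ⟨c, -, c', -, -, -, hres, rfl⟩ := mem_unfold1.1 hd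
  exacts [hT d hd, hres]

theorem fst_ne_of_mem_unfold1 (hd : d ∈ unfold1 T p) : ∀ l ∈ d, l.1 ≠ p := by
  obtain ⟨-, hp⟩ | ⟨c, -, c', -, -, -, -, rfl⟩ := mem_unfold1.1 hd
  · exact forall_mem_fst_ne_iff.2 hp
  · exact fun l hl => (mem_res.1 hl).2

theorem cnfSat_unfold1_of_cnfSat (hT : ∀ c ∈ T, IsClause c) (h : cnfSat I T) :
    cnfSat I (unfold1 T p) := by
  intro d hd
  obtain ⟨hd, -⟩ | ⟨c, hc, c', hc', hp, hp', -, rfl⟩ := mem_unfold1.1 hd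
  · exact h d hd
  · exact clauseSat_res (fun hn => hT c hc p ⟨hp, hn⟩) (fun hn => hT c' hc' p ⟨hn, hp'⟩)
      (h c hc) (h c' hc')

theorem mem_or_mem_of_not_clauseSat (h : cnfSat I (unfold1 T p)) (hIJ : AgreeOff {p} I J)
    (hc : c ∈ T) (hJ : ¬clauseSat J c) : (p, true) ∈ c ∨ (p, false) ∈ c := by
  by_contra! hp
  have hI : clauseSat I c := h c (mem_unfold1.2 (.inl ⟨hc, hp⟩))
  exact hJ ((hIJ.clauseSat_iff (forall_mem_fst_ne_iff.2 hp)).1 hI)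

theorem cnfSat_sdiff_or_cnfSat_insert (h : cnfSat I (unfold1 T p)) :
    cnfSat (I \ {p}) T ∨ cnfSat (insert p I) T := by
  by_contra! hno
  obtain ⟨hsdiff, hinsert⟩ := hno
  simp only [cnfSat, not_forall] at hsdiff hinsert
  obtain ⟨c, hc, hfalse⟩ := hsdiff
  obtain ⟨c', hc', hfalse'⟩ := hinsert
  have hIJ := agreeOff_sdiff {p} I
  have hIJ' := agreeOff_insert p I
  have hpos : (p, true) ∈ c := (mem_or_mem_of_not_clauseSat h hIJ hc hfalse).resolve_right
    fun hn => hfalse ⟨_, hn, litSat_neg.2 fun hp => hp.2 rfl⟩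
  have hneg : (p, false) ∈ c' := (mem_or_mem_of_not_clauseSat h hIJ' hc' hfalse').resolve_left
    fun hp => hfalse' ⟨_, hp, litSat_pos.2 (Set.mem_insert p I)⟩
  have hres : ¬clauseSat I (res c c' p) := fun hsat =>
    (clauseSat_or_clauseSat_of_res hIJ hIJ' hsat).elim hfalse hfalse'
  exact hres <| h _ <| mem_unfold1.2 <|
    .inr ⟨c, hc, c', hc', hpos, hneg, isClause_of_not_clauseSat hres, rfl⟩

theorem cnfSat_unfold1 (hT : ∀ c ∈ T, IsClause c) :
    cnfSat I (unfold1 T p) ↔ ∃ J, AgreeOff {p} I J ∧ cnfSat J T := by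
  constructor
  · intro h
    rcases cnfSat_sdiff_or_cnfSat_insert h with h | h
    · exact ⟨_, agreeOff_sdiff {p} I, h⟩
    · exact ⟨_, agreeOff_insert p I, h⟩
  · rintro ⟨J, hIJ, hJ⟩ d hd
    exact (hIJ.clauseSat_iff (fst_ne_of_mem_unfold1 hd)).2 (cnfSat_unfold1_of_cnfSat hT hJ d hd)

theorem cnfSat_unfoldList (hT : ∀ c ∈ T, IsClause c) (V : List α) :
    cnfSat I (unfoldList T V) ↔ ∃ J, AgreeOff {a | a ∈ V} I J ∧ cnfSat J T := by
  induction V generalizing T with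
  | nil => simp [unfoldList, agreeOff_empty]
  | cons p V ih =>
    have hV : {a | a ∈ p :: V} = {a | a ∈ V} ∪ {p} := by
      ext a
      simp
    calc cnfSat I (unfoldList (unfold1 T p) V)
      _ ↔ ∃ J, AgreeOff {a | a ∈ V} I J ∧ ∃ K, AgreeOff {p} J K ∧ cnfSat K T := by
        simp only [ih (isClause_of_mem_unfold1 hT), cnfSat_unfold1 hT]
      _ ↔ ∃ K, (∃ J, AgreeOff {a | a ∈ V} I J ∧ AgreeOff {p} J K) ∧ cnfSat K T := by
        tauto
      _ ↔ ∃ K, AgreeOff {a | a ∈ p :: V} I K ∧ cnfSat K T := by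
        simp only [exists_agreeOff_and_agreeOff, hV]

theorem unfold_comm_general (hT : ∀ c ∈ T, IsClause c) {V W : List α}
    (hVW : ∀ a, a ∈ V ↔ a ∈ W) :
    PropForm.equivalent (cnfToForm (unfoldList T V)) (cnfToForm (unfoldList T W)) := by
  intro I
  simp only [sat_cnfToForm, cnfSat_unfoldList hT, hVW]

end Unfolding

/-- `unfold(unfold(Π, p), q) ≡ unfold(unfold(Π, q), p)`. -/
theorem unfold_comm
    (T : Finset (Clause α)) (hT : ∀ c ∈ T, IsClause c) (p q : α) :
    PropForm.equivalent (cnfToForm (unfold1 (unfold1 T p) q))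
      (cnfToForm (unfold1 (unfold1 T q) p)) :=
  unfold_comm_general hT (V := [p, q]) (W := [q, p]) fun a => by
    simp only [List.mem_cons, or_left_comm]
end

section
/- Let Σ be a double Horn theory and V ⊆ 𝒜. Then Forget(Σ, V) is double Horn, i.e., both Forget(Σ, V) and its negation ¬Forget(Σ, V) are Horn expressible. -/
variable {α : Type*} [Fintype α] [DecidableEq α]

/-!
Being Horn expressible means having models closed under intersection, and forgetting is existential
projection: `I` is a model of `Forget φ V` iff some model of `φ` agrees with `I` off `V`. If models
`J₁`, `J₂` of `φ` agree off `V` with `I₁`, `I₂`, then `J₁ ∩ J₂` agrees with `I₁ ∩ I₂`; so closure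
under intersection passes from the models of `φ` to those of the projection. For the countermodels,
any `J` agreeing with `I₁ ∩ I₂` off `V` splits as `J₁ ∩ J₂`, where `Jᵢ` is `J` on `V` and `Iᵢ`
off `V`. Both halves of double Hornness are thus preserved, each independently of the other.
-/

variable {β : Type*}

section Cylindrification

/-- The cylindrification of a family `M` of interpretations along `V`: the interpretations that
coincide with a member of `M` outside `V`. It is the semantic counterpart of forgetting `V`. -/
def cylindrify (V : Set β) (M : Set (Set β)) : Set (Set β) := {I | ∃ J ∈ M, J \ V = I \ V}

variable {V W : Set β} {M : Set (Set β)}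

theorem sdiff_union_inter_sdiff {I J : Set β} : (I \ V ∪ J ∩ V) \ V = I \ V := by
  rw [Set.union_sdiff_distrib, sdiff_idem, Set.sdiff_eq_empty.2 Set.inter_subset_right,
    Set.union_empty]

theorem cylindrify_empty : cylindrify ∅ M = M := by
  simp [cylindrify]

theorem cylindrify_cylindrify : cylindrify V (cylindrify W M) = cylindrify (V ∪ W) M := by
  ext I
  constructor
  · rintro ⟨J, ⟨K, hK, hKJ⟩, hJI⟩
    refine ⟨K, hK, ?_⟩
    calc K \ (V ∪ W) = (K \ W) \ V := by rw [Set.sdiff_sdiff, Set.union_comm]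
      _ = (J \ V) \ W := by rw [hKJ, Set.sdiff_sdiff_comm]
      _ = I \ (V ∪ W) := by rw [hJI, Set.sdiff_sdiff]
  · rintro ⟨K, hK, hKI⟩
    refine ⟨K \ W ∪ I ∩ W, ⟨K, hK, sdiff_union_inter_sdiff.symm⟩, ?_⟩
    calc (K \ W ∪ I ∩ W) \ V = K \ (V ∪ W) ∪ (I ∩ W) \ V := by
          rw [Set.union_sdiff_distrib, Set.sdiff_sdiff, Set.union_comm W]
      _ = (I \ W ∪ I ∩ W) \ V := by
          rw [hKI, Set.union_sdiff_distrib, Set.sdiff_sdiff, Set.union_comm W]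
      _ = I \ V := by rw [Set.sdiff_union_inter]

theorem infClosed_cylindrify (hM : InfClosed M) : InfClosed (cylindrify V M) := by
  rintro I₁ ⟨J₁, hJ₁, hJI₁⟩ I₂ ⟨J₂, hJ₂, hJI₂⟩
  refine ⟨J₁ ∩ J₂, hM hJ₁ hJ₂, ?_⟩
  change (J₁ ∩ J₂) \ V = (I₁ ∩ I₂) \ V
  rw [Set.sdiff_inter_distrib_right, hJI₁, hJI₂, ← Set.sdiff_inter_distrib_right]

theorem infClosed_compl_cylindrify (hM : InfClosed Mᶜ) : InfClosed (cylindrify V M)ᶜ := by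
  rintro I₁ hI₁ I₂ hI₂ ⟨J, hJ, hJI⟩
  change J \ V = (I₁ ∩ I₂) \ V at hJI
  have glue_notMem {I : Set β} (hI : I ∈ (cylindrify V M)ᶜ) : I \ V ∪ J ∩ V ∈ Mᶜ :=
    fun hmem ↦ hI ⟨_, hmem, sdiff_union_inter_sdiff⟩
  have hsplit : J = (I₁ \ V ∪ J ∩ V) ∩ (I₂ \ V ∪ J ∩ V) := by
    rw [← Set.inter_union_distrib_right, ← Set.sdiff_inter_distrib_right, ← hJI,
      Set.sdiff_union_inter]
  rw [hsplit] at hJ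
  exact hM (glue_notMem hI₁) (glue_notMem hI₂) hJ

end Cylindrification

namespace PropForm

/-- The set of models of a formula. -/
def models (φ : PropForm β) : Set (Set β) := {I | Sat I φ}

theorem models_neg (φ : PropForm β) : (neg φ).models = φ.modelsᶜ := rfl

variable {I J : Set β}

theorem sat_foldr_disj_s18 {ι : Type*} (f : ι → PropForm β) (l : List ι) :
    Sat I (l.foldr (fun i φ ↦ disj (f i) φ) fls) ↔ ∃ i ∈ l, Sat I (f i) := by
  induction l with
  | nil => simp [Sat]
  | cons i l ih => simp [Sat, ih]

theorem sat_foldr_conj_s18 {ι : Type*} (f : ι → PropForm β) (l : List ι) :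
    Sat I (l.foldr (fun i φ ↦ conj (f i) φ) tru) ↔ ∀ i ∈ l, Sat I (f i) := by
  induction l with
  | nil => simp [Sat]
  | cons i l ih => simp [Sat, ih]

theorem sat_litToForm (l : β × Bool) : Sat I (litToForm l) ↔ litSat I l := by
  obtain ⟨p, _ | _⟩ := l <;> simp [litToForm, litSat, Sat]

theorem sat_clauseToForm (c : Clause β) : Sat I (clauseToForm c) ↔ clauseSat I c := by
  simp [clauseToForm, clauseSat, sat_foldr_disj_s18, sat_litToForm]

theorem sat_cnfToForm (T : Finset (Clause β)) : Sat I (cnfToForm T) ↔ cnfSat I T := by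
  simp [cnfToForm, cnfSat, sat_foldr_conj_s18, sat_clauseToForm]

variable [DecidableEq β]

theorem sat_congr {φ : PropForm β} (h : ∀ p ∈ φ.vars, p ∈ I ↔ p ∈ J) : Sat I φ ↔ Sat J φ := by
  induction φ with
  | var p => exact h p (Finset.mem_singleton_self p)
  | tru | fls => rfl
  | neg φ ih => exact not_congr (ih h)
  | conj φ ψ ihφ ihψ =>
    exact and_congr (ihφ fun p hp ↦ h p (Finset.mem_union_left _ hp))
      (ihψ fun p hp ↦ h p (Finset.mem_union_right _ hp))
  | disj φ ψ ihφ ihψ =>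
    exact or_congr (ihφ fun p hp ↦ h p (Finset.mem_union_left _ hp))
      (ihψ fun p hp ↦ h p (Finset.mem_union_right _ hp))

theorem sat_subst (p : β) (χ φ : PropForm β) :
    Sat I (subst p χ φ) ↔ Sat {q | if q = p then Sat I χ else q ∈ I} φ := by
  induction φ with
  | var q => by_cases h : q = p <;> simp [subst, Sat, h]
  | tru | fls => rfl
  | neg φ ih => exact not_congr ih
  | conj φ ψ ihφ ihψ => exact and_congr ihφ ihψ
  | disj φ ψ ihφ ihψ => exact or_congr ihφ ihψ

theorem sat_subst_tru (p : β) (φ : PropForm β) :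
    Sat I (subst p tru φ) ↔ Sat (insert p I) φ := by
  rw [sat_subst]
  refine sat_congr fun q _ ↦ ?_
  by_cases h : q = p <;> simp [Sat, h]

theorem sat_subst_fls (p : β) (φ : PropForm β) :
    Sat I (subst p fls φ) ↔ Sat (I \ {p}) φ := by
  rw [sat_subst]
  refine sat_congr fun q _ ↦ ?_
  by_cases h : q = p <;> simp [Sat, h]

theorem sat_forget1 (p : β) (φ : PropForm β) :
    Sat I (forget1 φ p) ↔ Sat (insert p I) φ ∨ Sat (I \ {p}) φ :=
  or_congr (sat_subst_tru p φ) (sat_subst_fls p φ)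

theorem models_forget1 (p : β) (φ : PropForm β) :
    (forget1 φ p).models = cylindrify {p} φ.models := by
  ext I
  refine (sat_forget1 p φ).trans ⟨?_, ?_⟩
  · rintro (h | h)
    · exact ⟨_, h, Set.insert_sdiff_of_mem _ rfl⟩
    · exact ⟨_, h, by simp⟩
  · rintro ⟨J, hJ, hJI⟩
    by_cases hp : p ∈ J
    · left
      rwa [← Set.insert_sdiff_singleton, ← hJI, Set.insert_sdiff_singleton, Set.insert_eq_of_mem hp]
    · right
      rwa [← hJI, Set.sdiff_singleton_eq_self hp]

theorem models_forget (V : List β) (φ : PropForm β) :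
    (Forget φ V).models = cylindrify {p | p ∈ V} φ.models := by
  induction V generalizing φ with
  | nil => simp [Forget, cylindrify_empty]
  | cons p V ih =>
    rw [Forget, ih, models_forget1, cylindrify_cylindrify]
    congr 1
    ext q
    simp

end PropForm

section HornClauses

variable [DecidableEq β]

theorem infClosed_setOf_clauseSat {c : Clause β} (hc : HornClause c) :
    InfClosed {I : Set β | clauseSat I c} := by
  rintro I ⟨⟨p, b⟩, hp, hpI⟩ J ⟨⟨q, b'⟩, hq, hqJ⟩
  cases b with
  | false => exact ⟨_, hp, fun h ↦ hpI h.1⟩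
  | true =>
    cases b' with
    | false => exact ⟨_, hq, fun h ↦ hqJ h.2⟩
    | true =>
      obtain rfl : p = q :=
        Finset.card_le_one.1 hc p (by simpa [posC] using hp) q (by simpa [posC] using hq)
      exact ⟨_, hp, hpI, hqJ⟩

theorem infClosed_models_cnfToForm {T : Finset (Clause β)} (hT : IsHornTheory T) :
    InfClosed (cnfToForm T).models := by
  intro I hI J hJ
  simp only [PropForm.models, Set.mem_ofPred_eq, PropForm.sat_cnfToForm] at hI hJ ⊢
  exact fun c hc ↦ infClosed_setOf_clauseSat (hT c hc) (hI c hc) (hJ c hc)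

/-- The Horn clause `⋀ B → h`, whose body `B` is a set of atoms and whose head `h` is an atom, or
`⊥` in the case `h = none`. -/
def implicationClause (B : Finset β) (h : Option β) : Clause β :=
  B ×ˢ ({false} : Finset Bool) ∪ h.toFinset ×ˢ ({true} : Finset Bool)

variable {B : Finset β} {h : Option β}

theorem clauseSat_implicationClause {I : Set β} :
    clauseSat I (implicationClause B h) ↔ (↑B ⊆ I → ∃ q ∈ h, q ∈ I) := by
  simp [clauseSat, litSat, implicationClause, or_and_right, exists_or, imp_iff_not_or,
    Set.not_subset]

theorem isClause_implicationClause (hB : ∀ q ∈ h, q ∉ B) : IsClause (implicationClause B h) := by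
  simpa [IsClause, implicationClause] using hB

theorem posC_implicationClause : posC (implicationClause B h) = h.toFinset := by
  ext p
  simp [posC, implicationClause]

theorem varsC_implicationClause : varsC (implicationClause B h) = B ∪ h.toFinset := by
  ext p
  simp [varsC, implicationClause]

theorem hornClause_implicationClause : HornClause (implicationClause B h) := by
  rw [HornClause, posC_implicationClause]
  cases h <;> simp

open scoped Classical in
/-- The Horn implicates of a formula `φ`. Only clauses over the atoms of `φ` are taken, so that
they form a finite theory even when there are infinitely many atoms. -/
noncomputable def hornImplicates (φ : PropForm β) : Finset (Clause β) :=
  {c ∈ (φ.vars ×ˢ (Finset.univ : Finset Bool)).powerset |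
    IsClause c ∧ HornClause c ∧ EntailsClause φ c}

variable {φ : PropForm β}

theorem mem_hornImplicates {c : Clause β} :
    c ∈ hornImplicates φ ↔
      varsC c ⊆ φ.vars ∧ IsClause c ∧ HornClause c ∧ EntailsClause φ c := by
  simp [hornImplicates, varsC, Finset.subset_iff, or_imp]

theorem exists_model_of_cnfSat_hornImplicates {I : Set β} (hI : cnfSat I (hornImplicates φ))
    (hBvars : B ⊆ φ.vars) (hBI : ↑B ⊆ I) (hvars : ∀ q ∈ h, q ∈ φ.vars) (hhI : ∀ q ∈ h, q ∉ I) :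
    ∃ J ∈ φ.models, ↑B ⊆ J ∧ ∀ q ∈ h, q ∉ J := by
  by_contra! hno
  have hentails : EntailsClause φ (implicationClause B h) := fun J hJ ↦
    clauseSat_implicationClause.2 (hno J hJ)
  have hmem : implicationClause B h ∈ hornImplicates φ := by
    refine mem_hornImplicates.2 ⟨?_, isClause_implicationClause fun q hq hqB ↦ hhI q hq (hBI hqB),
      hornClause_implicationClause, hentails⟩
    rw [varsC_implicationClause]
    exact Finset.union_subset hBvars fun q hq ↦ hvars q (Option.mem_toFinset.1 hq)
  obtain ⟨q, hq, hqI⟩ := clauseSat_implicationClause.1 (hI _ hmem) hBI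
  exact hhI q hq hqI

theorem mem_models_of_cnfSat_hornImplicates (hφ : InfClosed φ.models) {I : Set β}
    (hI : cnfSat I (hornImplicates φ)) : I ∈ φ.models := by
  classical
  -- The intersection of a model above `I ∩ vars φ` (head `none`) with, for each atom `q` of `φ`
  -- outside `I`, such a model omitting `q` (head `some q`) agrees with `I` on `vars φ`.
  let B : Finset β := {p ∈ φ.vars | p ∈ I}
  let heads : Finset (Option β) := Finset.insertNone {p ∈ φ.vars | p ∉ I}
  have hnonempty : heads.Nonempty := ⟨none, by simp [heads]⟩
  have hmodel (h : Option β) (hh : h ∈ heads) : ∃ J ∈ φ.models, ↑B ⊆ J ∧ ∀ q ∈ h, q ∉ J := by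
    have hq : ∀ q ∈ h, q ∈ φ.vars ∧ q ∉ I := by simpa [heads, Finset.mem_insertNone] using hh
    exact exists_model_of_cnfSat_hornImplicates hI (Finset.filter_subset _ _)
      (fun p hp ↦ (Finset.mem_filter.1 hp).2) (fun q hqh ↦ (hq q hqh).1) (fun q hqh ↦ (hq q hqh).2)
  choose! J hJ hBJ hheadJ using hmodel
  have hmeet : heads.inf' hnonempty J ∈ φ.models := hφ.finsetInf'_mem hnonempty hJ
  refine (PropForm.sat_congr fun p hp ↦ ⟨fun hpJ ↦ ?_, fun hpI ↦ ?_⟩).1 hmeet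
  · by_contra hpI
    have hsome : some p ∈ heads := by simp [heads, hp, hpI]
    exact hheadJ _ hsome p rfl (Finset.inf'_le J hsome hpJ)
  · have hB : (B : Set β) ≤ heads.inf' hnonempty J := Finset.le_inf' hnonempty J hBJ
    exact hB (by simp [B, hp, hpI])

theorem hornExpressible_iff_infClosed : HornExpressible φ ↔ InfClosed φ.models := by
  constructor
  · rintro ⟨T, -, hT, hequiv⟩
    have hmodels : φ.models = (cnfToForm T).models := Set.ext hequiv
    exact hmodels ▸ infClosed_models_cnfToForm hT
  · intro hφ
    refine ⟨hornImplicates φ, fun c hc ↦ (mem_hornImplicates.1 hc).2.1,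
      fun c hc ↦ (mem_hornImplicates.1 hc).2.2.1, fun I ↦ ?_⟩
    rw [PropForm.sat_cnfToForm]
    exact ⟨fun hI c hc ↦ (mem_hornImplicates.1 hc).2.2.2 I hI,
      mem_models_of_cnfSat_hornImplicates hφ⟩

theorem HornExpressible.forget (hφ : HornExpressible φ) (V : List β) :
    HornExpressible (PropForm.Forget φ V) := by
  rw [hornExpressible_iff_infClosed] at hφ ⊢
  rw [PropForm.models_forget]
  exact infClosed_cylindrify hφ

theorem HornExpressible.neg_forget (hφ : HornExpressible (PropForm.neg φ)) (V : List β) :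
    HornExpressible (PropForm.neg (PropForm.Forget φ V)) := by
  rw [hornExpressible_iff_infClosed, PropForm.models_neg] at hφ ⊢
  rw [PropForm.models_forget]
  exact infClosed_compl_cylindrify hφ

theorem forget_preserves_double_horn_general (hφ : HornExpressible φ)
    (hneg : HornExpressible (PropForm.neg φ)) (V : List β) :
    HornExpressible (PropForm.Forget φ V) ∧ HornExpressible (PropForm.neg (PropForm.Forget φ V)) :=
  ⟨hφ.forget V, hneg.neg_forget V⟩

end HornClauses

/-- If `Σ` is a double Horn theory (a Horn theory whose negation is
also Horn expressible), then `Forget(Σ, V)` is double Horn: both `Forget(Σ, V)` and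
`¬Forget(Σ, V)` are Horn expressible. -/
theorem forget_preserves_double_horn
    (S : Finset (Clause α)) (hS : ∀ c ∈ S, IsClause c)
    (hHorn : IsHornTheory S)
    (hdouble : HornExpressible (PropForm.neg (cnfToForm S)))
    (V : List α) :
    HornExpressible (PropForm.Forget (cnfToForm S) V) ∧
      HornExpressible (PropForm.neg (PropForm.Forget (cnfToForm S) V)) :=
  forget_preserves_double_horn_general ⟨S, hS, hHorn, fun _ ↦ Iff.rfl⟩ hdouble V
end
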